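/- Let V be a finite-dimensional real inner product space, let a₋₁, a₀, a₁ : V → V be skew-adjoint linear maps, and for ε > 0 set Δ_ε := −(ε⁻¹ a₋₁ + a₀ + ε a₁)². Then for u₀ ∈ V the following are equivalent: (1) there is a C^∞ map ũ : ℝ → V with ũ(0) = u₀ such that ε ↦ ε · Δ_ε ũ(ε) is bounded on (0, 1]; (2) there is a C^∞ map ũ : ℝ → V with ũ(0) = u₀ such that ε ↦ Δ_ε ũ(ε) is bounded on (0, 1]; (3) a₋₁ u₀ = 0. -/

import Mathlib

open scoped RealInnerProductSpace

/-!
Write `D ε = ε⁻¹ a₋₁ + a₀ + ε a₁`, so `Δ_ε = -D ε ∘ D ε`. The point is that a skew-adjoint `a` satisfies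
`ker a² = ker a`, because `⟪a² u, u⟫ = -‖a u‖²`, and hence also `range a² = range a`.

If `ε Δ_ε w(ε)` is bounded, then `(ε D ε)² w(ε) = O(ε)`; its left side tends to `a₋₁² u₀` as
`ε → 0`, so `a₋₁² u₀ = 0` and `a₋₁ u₀ = 0`.

Conversely, if `a₋₁ u₀ = 0`, the affine extension `u₀ + ε u₁` satisfies
`Δ_ε (u₀ + ε u₁) = -ε⁻¹ a₋₁ (a₀ u₀ + a₋₁ u₁) + (polynomial in ε)`, and `range a₋₁² = range a₋₁` yields
`u₁` with `a₋₁² u₁ = -a₋₁ a₀ u₀`, which removes the singular term.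
-/

open Filter Topology

section SkewAdjoint

variable {V : Type*} [NormedAddCommGroup V] [InnerProductSpace ℝ V]

lemma skew_apply_eq_zero_of_sq (a : V →ₗ[ℝ] V)
    (ha : ∀ u v : V, ⟪a u, v⟫ = -⟪u, a v⟫) (u : V) (h : a (a u) = 0) : a u = 0 := by
  have h' := ha u (a u)
  rw [h, inner_zero_right, neg_zero] at h'
  exact inner_self_eq_zero.mp h'

/-- For a skew-adjoint `a` in finite dimension, `range a ⊆ range a²`; by rank-nullity this is
equivalent to `ker a² = ker a`. -/
lemma skew_exists_sq_eq [FiniteDimensional ℝ V] (a : V →ₗ[ℝ] V)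
    (ha : ∀ u v : V, ⟪a u, v⟫ = -⟪u, a v⟫) (x : V) : ∃ v, a (a v) = a x := by
  have hker : LinearMap.ker (a ∘ₗ a) = LinearMap.ker a := by
    ext u
    simp only [LinearMap.mem_ker, LinearMap.comp_apply]
    exact ⟨skew_apply_eq_zero_of_sq a ha u, fun h => by rw [h, map_zero]⟩
  have h1 := LinearMap.finrank_range_add_finrank_ker (a ∘ₗ a)
  have h2 := LinearMap.finrank_range_add_finrank_ker a
  rw [hker] at h1
  have hrange : LinearMap.range (a ∘ₗ a) = LinearMap.range a :=
    Submodule.eq_of_le_of_finrank_eq (LinearMap.range_comp_le_range a a) (by omega)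
  have hx : a x ∈ LinearMap.range (a ∘ₗ a) := hrange ▸ LinearMap.mem_range_self a x
  exact hx

/-- A continuous extension `w` of `u₀` with `ε (ε⁻¹ a + b + ε c)² w(ε)` bounded forces
`a u₀ = 0`. -/
lemma leading_apply_eq_zero_of_bounded [FiniteDimensional ℝ V] (a b c : V →ₗ[ℝ] V)
    (ha : ∀ u v : V, ⟪a u, v⟫ = -⟪u, a v⟫) (w : ℝ → V) (hw : Continuous w) (C : ℝ)
    (hC : ∀ ε ∈ Set.Ioc (0 : ℝ) 1,
      ‖ε • (-((ε⁻¹ • a + b + ε • c) ∘ₗ (ε⁻¹ • a + b + ε • c))) (w ε)‖ ≤ C) :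
    a (w 0) = 0 := by
  have hac : Continuous a := a.continuous_of_finiteDimensional
  have hbc : Continuous b := b.continuous_of_finiteDimensional
  have hcc : Continuous c := c.continuous_of_finiteDimensional
  let y : ℝ → V := fun ε => a (w ε) + ε • b (w ε) + (ε * ε) • c (w ε)
  let Q : ℝ → V := fun ε => a (y ε) + ε • b (y ε) + (ε * ε) • c (y ε)
  have hy : Continuous y := by fun_prop
  have hQ : Continuous Q := by fun_prop
  -- `Q ε = (ε D ε)² w(ε)` is `O(ε)`, since `Q ε = -ε (ε Δ_ε w(ε))`.
  have hbound : ∀ ε ∈ Set.Ioc (0 : ℝ) 1, ‖Q ε‖ ≤ ε * C := by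
    intro ε hε
    have hpos : 0 < ε := hε.1
    have hne : ε ≠ 0 := hpos.ne'
    have hQε : Q ε = -(ε • (ε • (-((ε⁻¹ • a + b + ε • c) ∘ₗ (ε⁻¹ • a + b + ε • c))) (w ε))) := by
      simp only [Q, y, LinearMap.neg_apply, LinearMap.comp_apply, LinearMap.add_apply,
        LinearMap.smul_apply, map_add, map_smul]
      match_scalars <;> field_simp
    rw [hQε, norm_neg, norm_smul, Real.norm_of_nonneg hpos.le]
    exact mul_le_mul_of_nonneg_left (hC ε hε) hpos.le
  have hlim : Tendsto Q (𝓝[>] 0) (𝓝 (Q 0)) := hQ.continuousAt.tendsto.mono_left nhdsWithin_le_nhds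
  have hzero : Tendsto Q (𝓝[>] 0) (𝓝 0) := by
    have hlin : Tendsto (fun ε : ℝ => ε * C) (𝓝[>] 0) (𝓝 0) := by
      have h : Continuous fun ε : ℝ => ε * C := by fun_prop
      simpa using (h.tendsto 0).mono_left nhdsWithin_le_nhds
    refine squeeze_zero_norm' ?_ hlin
    filter_upwards [Ioc_mem_nhdsGT (zero_lt_one' ℝ)] with ε hε using hbound ε hε
  have hQ0 : Q 0 = 0 := tendsto_nhds_unique hlim hzero
  exact skew_apply_eq_zero_of_sq a ha _ (by simpa [Q, y] using hQ0)

/-- If `a u₀ = 0`, a suitable first-order correction `u₁` makes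
`(ε⁻¹ a + b + ε c)² (u₀ + ε u₁)` polynomial in `ε`, hence bounded on `(0, 1]`. -/
lemma exists_bounded_affine_extension [FiniteDimensional ℝ V] (a b c : V →ₗ[ℝ] V)
    (ha : ∀ u v : V, ⟪a u, v⟫ = -⟪u, a v⟫) (u₀ : V) (hu : a u₀ = 0) :
    ∃ u₁ : V, ∃ C : ℝ, ∀ ε ∈ Set.Ioc (0 : ℝ) 1,
      ‖(-((ε⁻¹ • a + b + ε • c) ∘ₗ (ε⁻¹ • a + b + ε • c))) (u₀ + ε • u₁)‖ ≤ C := by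
  obtain ⟨u₁, hu₁⟩ := skew_exists_sq_eq a ha (-b u₀)
  refine ⟨u₁, ?_⟩
  -- `D ε (u₀ + ε u₁) = p + ε q + ε² r`, and `u₁` was chosen so that `a p = 0`.
  let p := b u₀ + a u₁
  let q := c u₀ + b u₁
  let r := c u₁
  have hp : a p = 0 := by simp [p, hu₁]
  let P : ℝ → V := fun ε => (b p + ε • c p) + (a q + ε • b q + (ε * ε) • c q)
    + ε • (a r + ε • b r + (ε * ε) • c r)
  have hP : Continuous P := by fun_prop
  obtain ⟨C, hC⟩ := isCompact_Icc.exists_bound_of_continuousOn (s := Set.Icc (0 : ℝ) 1)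
    hP.continuousOn
  refine ⟨C, fun ε hε => ?_⟩
  have hne : ε ≠ 0 := hε.1.ne'
  have hD : (ε⁻¹ • a + b + ε • c) (u₀ + ε • u₁) = p + ε • q + (ε * ε) • r := by
    simp only [p, q, r, LinearMap.add_apply, LinearMap.smul_apply, map_add, map_smul, hu]
    match_scalars <;> field_simp
  have hDD : (ε⁻¹ • a + b + ε • c) (p + ε • q + (ε * ε) • r) = P ε := by
    simp only [P, LinearMap.add_apply, LinearMap.smul_apply, map_add, map_smul, hp]
    match_scalars <;> field_simp
  rw [LinearMap.neg_apply, LinearMap.comp_apply, hD, hDD, norm_neg]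
  exact hC ε (Set.Ioc_subset_Icc_self hε)

end SkewAdjoint

/-- Characterization of `ℰ₁ = ℰ₂ = ker a₋₁`: for `u₀ ∈ V` the existence of a
smooth extension `w` with `ε Δ_ε w(ε)` bounded on `(0,1]`, the existence of one
with `Δ_ε w(ε)` bounded on `(0,1]`, and `a₋₁ u₀ = 0` are all equivalent. -/
theorem E1_eq_E2_eq_ker
    (V : Type*) [NormedAddCommGroup V] [InnerProductSpace ℝ V]
    [FiniteDimensional ℝ V]
    (aneg a₀ a₁ : V →ₗ[ℝ] V)
    (hneg : ∀ u v : V, ⟪aneg u, v⟫ = -⟪u, aneg v⟫)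
    (h₀ : ∀ u v : V, ⟪a₀ u, v⟫ = -⟪u, a₀ v⟫)
    (h₁ : ∀ u v : V, ⟪a₁ u, v⟫ = -⟪u, a₁ v⟫)
    (Δ : ℝ → (V →ₗ[ℝ] V))
    (hΔ : ∀ ε : ℝ, 0 < ε → Δ ε =
      -((ε⁻¹ • aneg + a₀ + ε • a₁) ∘ₗ (ε⁻¹ • aneg + a₀ + ε • a₁)))
    (u₀ : V) :
    ((∃ w : ℝ → V, ContDiff ℝ (⊤ : ℕ∞) w ∧ w 0 = u₀ ∧
        ∃ C : ℝ, ∀ ε ∈ Set.Ioc (0 : ℝ) 1, ‖ε • (Δ ε) (w ε)‖ ≤ C)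
      ↔ aneg u₀ = 0) ∧
    ((∃ w : ℝ → V, ContDiff ℝ (⊤ : ℕ∞) w ∧ w 0 = u₀ ∧
        ∃ C : ℝ, ∀ ε ∈ Set.Ioc (0 : ℝ) 1, ‖(Δ ε) (w ε)‖ ≤ C)
      ↔ aneg u₀ = 0) := by
  have hnec : ∀ w : ℝ → V, ContDiff ℝ (⊤ : ℕ∞) w → w 0 = u₀ →
      (∃ C : ℝ, ∀ ε ∈ Set.Ioc (0 : ℝ) 1, ‖ε • (Δ ε) (w ε)‖ ≤ C) → aneg u₀ = 0 := by
    rintro w hw rfl ⟨C, hC⟩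
    refine leading_apply_eq_zero_of_bounded aneg a₀ a₁ hneg w hw.continuous C fun ε hε => ?_
    rw [← hΔ ε hε.1]
    exact hC ε hε
  have hweak : ∀ (w : ℝ → V) (C : ℝ), (∀ ε ∈ Set.Ioc (0 : ℝ) 1, ‖(Δ ε) (w ε)‖ ≤ C) →
      ∀ ε ∈ Set.Ioc (0 : ℝ) 1, ‖ε • (Δ ε) (w ε)‖ ≤ C := by
    intro w C hC ε hε
    rw [norm_smul, Real.norm_of_nonneg hε.1.le]
    exact (mul_le_of_le_one_left (norm_nonneg _) hε.2).trans (hC ε hε)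
  have hsuff : aneg u₀ = 0 → ∃ w : ℝ → V, ContDiff ℝ (⊤ : ℕ∞) w ∧ w 0 = u₀ ∧
      ∃ C : ℝ, ∀ ε ∈ Set.Ioc (0 : ℝ) 1, ‖(Δ ε) (w ε)‖ ≤ C := by
    intro hu
    obtain ⟨u₁, C, hC⟩ := exists_bounded_affine_extension aneg a₀ a₁ hneg u₀ hu
    refine ⟨fun ε => u₀ + ε • u₁, by fun_prop, by simp, C, fun ε hε => ?_⟩
    rw [hΔ ε hε.1]
    exact hC ε hε
  refine ⟨⟨?_, fun hu => ?_⟩, ⟨?_, hsuff⟩⟩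
  · rintro ⟨w, hw, hw0, hC⟩
    exact hnec w hw hw0 hC
  · obtain ⟨w, hw, hw0, C, hC⟩ := hsuff hu
    exact ⟨w, hw, hw0, C, hweak w C hC⟩
  · rintro ⟨w, hw, hw0, C, hC⟩
    exact hnec w hw hw0 ⟨C, hweak w C hC⟩
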